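/- There exists a subgroup B of GL₄(ℤ) that is isomorphic to the direct product F₂ × F₂ of two free groups of rank 2 and such that no nontrivial element of B fixes the row vector v = (1, 0, 1, 0) ∈ ℤ⁴; that is, B ∩ Stab(v) is the trivial subgroup. -/

import Mathlib

open Matrix

/-!
Let `m ≥ 3`. The transvections `1 + m E₀₁` and `1 + m E₁₀` play ping-pong on the plane of row
vectors `u`: the `i`-th one or its inverse keeps `u i` and adds `± m * u i` to the other coordinate,
and unless it undoes the previous letter this results in `u i ^ 2 < ± (u 0 * u 1)`, with the same
sign. The vector `(1, 1)` lies in none of these four regions but every letter moves it into its own,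
so no nontrivial reduced word brings `(1, 1)` back. Conjugating by `1 + E₀₁` replaces `(1, 1)` by
`(1, 0)`, and a block diagonal matrix fixes `(1, 0, 1, 0)` if and only if each of its two blocks
fixes `(1, 0)`.
-/

section PingPong

open scoped RightActions

variable {ι M α : Type*} [Monoid M] [MulAction Mᵐᵒᵖ α] {φ : FreeGroup ι →* M}
  {X : ι × Bool → Set α}

lemma exists_op_smul_mem_of_isReduced
    (hX : ∀ s t : ι × Bool, (s.1 = t.1 → s.2 = t.2) →
      ∀ u ∈ X s, u <• φ (FreeGroup.mk [t]) ∈ X t)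
    {L : List (ι × Bool)} {s : ι × Bool} (hL : FreeGroup.IsReduced (s :: L))
    {u : α} (hu : u ∈ X s) :
    ∃ t, u <• φ (FreeGroup.mk L) ∈ X t := by
  induction L generalizing s u with
  | nil => exact ⟨s, by simpa [← FreeGroup.one_eq_mk] using hu⟩
  | cons t L ih =>
    obtain ⟨hst, htL⟩ := FreeGroup.isReduced_cons_cons.mp hL
    have hmk : FreeGroup.mk (t :: L) = FreeGroup.mk [t] * FreeGroup.mk L := by simp
    simpa only [hmk, map_mul, op_smul_mul] using ih htL (hX s t hst u hu)

theorem eq_one_of_op_smul_eq_of_ping_pong {p : α} (hp : ∀ t, p ∉ X t)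
    (hpX : ∀ t, p <• φ (FreeGroup.mk [t]) ∈ X t)
    (hX : ∀ s t : ι × Bool, (s.1 = t.1 → s.2 = t.2) →
      ∀ u ∈ X s, u <• φ (FreeGroup.mk [t]) ∈ X t)
    {w : FreeGroup ι} (hw : p <• φ w = p) : w = 1 := by
  classical
  cases hL : w.toWord with
  | nil => exact FreeGroup.toWord_eq_nil_iff.mp hL
  | cons t L =>
    have hred : FreeGroup.IsReduced (t :: L) := hL ▸ FreeGroup.isReduced_toWord
    have hmk : w = FreeGroup.mk [t] * FreeGroup.mk L := by
      rw [← FreeGroup.mk_toWord (x := w), hL]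
      simp
    obtain ⟨s, hs⟩ := exists_op_smul_mem_of_isReduced hX hred (hpX t)
    rw [← op_smul_mul, ← map_mul, ← hmk, hw] at hs
    exact absurd hs (hp s)

end PingPong

section TrivialStabilizer

variable {G H m n R : Type*} [Group G] [Group H] [Fintype m] [DecidableEq m] [Fintype n]
  [DecidableEq n]

/-- The row vector `v` has trivial stabilizer under the right action `v ↦ v ᵥ* ρ g` of `G` that is
given by the representation `ρ`. -/
def TrivialStabilizer [Semiring R] (ρ : G →* GL n R) (v : n → R) : Prop :=
  ∀ g, v ᵥ* (ρ g : Matrix n n R) = v → g = 1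

/-- The external direct sum of two matrix representations, a representation of the product group by
block diagonal matrices. -/
def blockDiagonalRep [Semiring R] (ρ : G →* GL m R) (σ : H →* GL n R) :
    G × H →* GL (m ⊕ n) R :=
  MonoidHom.toHomUnits
    { toFun := fun g ↦ fromBlocks (ρ g.1) 0 0 (σ g.2)
      map_one' := by simp
      map_mul' := by simp [fromBlocks_multiply] }

lemma coe_blockDiagonalRep [Semiring R] (ρ : G →* GL m R) (σ : H →* GL n R) (g : G × H) :
    (blockDiagonalRep ρ σ g : Matrix (m ⊕ n) (m ⊕ n) R) = fromBlocks (ρ g.1) 0 0 (σ g.2) :=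
  rfl

namespace TrivialStabilizer

lemma conj [Semiring R] {ρ : G →* GL n R} {v : n → R} (P : GL n R)
    (h : TrivialStabilizer ρ (v ᵥ* (P : Matrix n n R))) :
    TrivialStabilizer ((MulAut.conj P).toMonoidHom.comp ρ) v := by
  intro g hg
  refine h g ?_
  calc v ᵥ* P.val ᵥ* (ρ g).val
      = v ᵥ* (P * ρ g * P⁻¹ : GL n R).val ᵥ* P.val := by
        simp only [vecMul_vecMul, ← Units.val_mul, inv_mul_cancel_right]
    _ = v ᵥ* P.val := congrArg (· ᵥ* P.val) hg

lemma blockDiagonalRep [Semiring R] {ρ : G →* GL m R} {σ : H →* GL n R} {v : m → R} {w : n → R}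
    (hρ : TrivialStabilizer ρ v) (hσ : TrivialStabilizer σ w) :
    TrivialStabilizer (blockDiagonalRep ρ σ) (Sum.elim v w) := by
  intro g hg
  have hsum : Sum.elim (v ᵥ* (ρ g.1).val) (w ᵥ* (σ g.2).val) = Sum.elim v w := by
    simpa [coe_blockDiagonalRep, vecMul_fromBlocks] using hg
  exact Prod.ext (hρ _ (congrArg (· ∘ Sum.inl) hsum)) (hσ _ (congrArg (· ∘ Sum.inr) hsum))

lemma reindex [CommSemiring R] {ρ : G →* GL m R} {v : m → R} (h : TrivialStabilizer ρ v)
    (e : m ≃ n) :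
    TrivialStabilizer ((Units.map (reindexAlgEquiv R R e : _ →* Matrix n n R)).comp ρ)
      (v ∘ e.symm) := by
  intro g hg
  have hg' : (v ᵥ* (ρ g).val) ∘ e.symm = v ∘ e.symm := by
    simpa [submatrix_vecMul_equiv, Function.comp_assoc] using hg
  exact h g (e.symm.surjective.injective_comp_right hg')

lemma injective [Semiring R] {ρ : G →* GL n R} {v : n → R} (h : TrivialStabilizer ρ v) :
    Function.Injective ρ :=
  (injective_iff_map_eq_one ρ).mpr fun g hg ↦ h g (by simp [hg])

lemma exists_subgroup [Semiring R] {ρ : G →* GL n R} {v : n → R} (h : TrivialStabilizer ρ v) :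
    ∃ B : Subgroup (GL n R), Nonempty (B ≃* G) ∧
      ∀ M ∈ B, v ᵥ* (M : Matrix n n R) = v → M = 1 := by
  refine ⟨ρ.range, ⟨(MonoidHom.ofInjective h.injective).symm⟩, ?_⟩
  rintro _ ⟨g, rfl⟩ hg
  rw [h g hg, map_one]

end TrivialStabilizer

end TrivialStabilizer

section Transvections

lemma vecMul_transvection {n R : Type*} [Fintype n] [DecidableEq n] [CommRing R] (i j : n)
    (c : R) (u : n → R) : u ᵥ* transvection i j c = u + Pi.single j (u i * c) := by
  rw [transvection, vecMul_add, vecMul_one]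
  congr 1
  ext k
  simp [vecMul, dotProduct, single_apply, Pi.single_apply, ite_and, eq_comm]

variable {R : Type*} [CommRing R]

/-- The sign of a letter `(i, b)` of a word in a free group: `b = true` stands for the `i`-th
generator and `b = false` for its inverse. -/
def letterSign (b : Bool) : R := cond b 1 (-1)

/-- The representation of the free group of rank two whose generators are the transvections
`1 + c E₀₁` and `1 + c E₁₀`. -/
def transvectionRep (c : R) : FreeGroup (Fin 2) →* GL (Fin 2) R :=
  SpecialLinearGroup.toGL.comp <| FreeGroup.lift fun i ↦
    SpecialLinearGroup.transvection (show i ≠ 1 - i by decide +revert) c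

lemma coe_transvectionRep_mk_singleton (c : R) (t : Fin 2 × Bool) :
    (transvectionRep c (FreeGroup.mk [t]) : Matrix (Fin 2) (Fin 2) R) =
      transvection t.1 (1 - t.1) (letterSign t.2 * c) := by
  obtain ⟨i, _ | _⟩ := t
  · simp [transvectionRep, letterSign, SpecialLinearGroup.transvection_inv,
      SpecialLinearGroup.transvection_coe, transvection, -coe_units_inv]
  · simp [transvectionRep, letterSign, SpecialLinearGroup.transvection_coe, transvection]

lemma apply_zero_mul_apply_one (u : Fin 2 → R) (i : Fin 2) : u 0 * u 1 = u i * u (1 - i) := by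
  fin_cases i <;> simp [mul_comm]

lemma letterSign_mul_self (b : Bool) : (letterSign b : R) * letterSign b = 1 := by
  cases b <;> simp [letterSign]

variable [LinearOrder R]

/-- The ping-pong region of the letter `t` for the action of `transvectionRep` on row vectors. -/
def pingPongRegion (t : Fin 2 × Bool) : Set (Fin 2 → R) :=
  {u | u t.1 ^ 2 < letterSign t.2 * (u 0 * u 1)}

variable [IsStrictOrderedRing R] {u : Fin 2 → R} {s t : Fin 2 × Bool} {c : R}

lemma vecMul_transvectionRep_mem_pingPongRegion (hc : 3 ≤ c) (ht : u t.1 ≠ 0)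
    (hu : -(u t.1 ^ 2) ≤ letterSign t.2 * (u 0 * u 1)) :
    u ᵥ* (transvectionRep c (FreeGroup.mk [t])).val ∈ pingPongRegion t := by
  set u' := u ᵥ* (transvectionRep c (FreeGroup.mk [t])).val with hu'
  rw [coe_transvectionRep_mk_singleton, vecMul_transvection] at hu'
  obtain ⟨i, b⟩ := t
  have hfix : u' i = u i := by
    fin_cases i <;> simp [hu']
  have hadd : u' (1 - i) = u (1 - i) + u i * (letterSign b * c) := by
    simp [hu']
  have hprod : u' 0 * u' 1 = u 0 * u 1 + letterSign b * c * u i ^ 2 := by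
    rw [apply_zero_mul_apply_one u i, apply_zero_mul_apply_one u' i, hfix, hadd]
    ring
  calc u' i ^ 2 = u i ^ 2 := by rw [hfix]
    _ < -(u i ^ 2) + c * u i ^ 2 := by nlinarith [sq_pos_of_ne_zero ht]
    _ ≤ letterSign b * (u 0 * u 1) + c * u i ^ 2 := by gcongr
    _ = letterSign b * (u' 0 * u' 1) := by
      linear_combination (-(c * u i ^ 2)) * letterSign_mul_self (R := R) b - letterSign b * hprod

lemma apply_ne_zero_of_mem_pingPongRegion (hu : u ∈ pingPongRegion s) (i : Fin 2) : u i ≠ 0 := by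
  intro hi
  have hlt : u s.1 ^ 2 < letterSign s.2 * (u 0 * u 1) := hu
  rw [apply_zero_mul_apply_one u i, hi, zero_mul, mul_zero] at hlt
  exact (sq_nonneg _).not_gt hlt

lemma abs_letterSign (b : Bool) : |(letterSign b : R)| = 1 := by
  cases b <;> simp [letterSign]

lemma neg_sq_le_of_mem_pingPongRegion (hu : u ∈ pingPongRegion s) (hst : s.1 = t.1 → s.2 = t.2) :
    -(u t.1 ^ 2) ≤ letterSign t.2 * (u 0 * u 1) := by
  have hlt : u s.1 ^ 2 < letterSign s.2 * (u 0 * u 1) := hu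
  by_cases h : s.1 = t.1
  · rw [← h, ← hst h]
    linarith [sq_nonneg (u s.1)]
  · have hprod : u 0 * u 1 = u s.1 * u t.1 := by
      rw [apply_zero_mul_apply_one u s.1, show t.1 = 1 - s.1 by omega]
    have habs (b : Bool) : |letterSign b * (u 0 * u 1)| = |u s.1| * |u t.1| := by
      rw [abs_mul, abs_letterSign, one_mul, hprod, abs_mul]
    have hst' : |u s.1| < |u t.1| := by
      refine lt_of_mul_lt_mul_left ?_ (abs_nonneg (u s.1))
      calc |u s.1| * |u s.1| = u s.1 ^ 2 := by rw [abs_mul_abs_self, sq]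
        _ < letterSign s.2 * (u 0 * u 1) := hlt
        _ ≤ |u s.1| * |u t.1| := habs s.2 ▸ le_abs_self _
    calc -(u t.1 ^ 2) = -(|u t.1| * |u t.1|) := by rw [abs_mul_abs_self, sq]
      _ ≤ -(|u s.1| * |u t.1|) := by gcongr
      _ ≤ letterSign t.2 * (u 0 * u 1) := habs t.2 ▸ neg_abs_le _

theorem trivialStabilizer_transvectionRep (hc : 3 ≤ c) :
    TrivialStabilizer (transvectionRep c) ![1, 1] := by
  intro w hw
  refine eq_one_of_op_smul_eq_of_ping_pong (φ := (Units.coeHom _).comp (transvectionRep c))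
    (X := pingPongRegion) (p := (![1, 1] : Fin 2 → R)) ?_ ?_ ?_ hw
  · rintro ⟨i, b⟩
    fin_cases i <;> cases b <;> simp [pingPongRegion, letterSign]
  · rintro ⟨i, b⟩
    apply vecMul_transvectionRep_mem_pingPongRegion hc <;>
      fin_cases i <;> cases b <;> simp [letterSign]
  · intro s t hst u hu
    exact vecMul_transvectionRep_mem_pingPongRegion hc (apply_ne_zero_of_mem_pingPongRegion hu _)
      (neg_sq_le_of_mem_pingPongRegion hu hst)

end Transvections

theorem exists_F2xF2_in_GL4_trivial_stab_general (R : Type*) [CommRing R] [LinearOrder R]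
    [IsStrictOrderedRing R] :
    ∃ B : Subgroup (GL (Fin 4) R),
      Nonempty (B ≃* (FreeGroup (Fin 2) × FreeGroup (Fin 2))) ∧
        ∀ M ∈ B, Matrix.vecMul ![1, 0, 1, 0] (M : Matrix (Fin 4) (Fin 4) R) = ![1, 0, 1, 0] →
          M = 1 := by
  let P : GL (Fin 2) R := SpecialLinearGroup.transvection (zero_ne_one (α := Fin 2)) (1 : R)
  have hP : ![1, 0] ᵥ* (P : Matrix (Fin 2) (Fin 2) R) = ![1, 1] := by
    change ![1, 0] ᵥ* transvection 0 1 (1 : R) = ![1, 1]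
    rw [vecMul_transvection]
    ext i
    fin_cases i <;> simp
  have hfree : TrivialStabilizer ((MulAut.conj P).toMonoidHom.comp (transvectionRep 3)) ![1, 0] :=
    .conj P (hP ▸ trivialStabilizer_transvectionRep le_rfl)
  have hv : Sum.elim ![1, 0] ![1, 0] ∘ finSumFinEquiv.symm = (![1, 0, 1, 0] : Fin 4 → R) := by
    ext i
    fin_cases i <;> rfl
  exact hv ▸ ((hfree.blockDiagonalRep hfree).reindex finSumFinEquiv).exists_subgroup

/-- There is a subgroup `B` of `GL₄(ℤ)` isomorphic to `F₂ × F₂` such that no nontrivial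
element of `B` fixes the row vector `v = (1, 0, 1, 0) ∈ ℤ⁴`; that is, `B ∩ Stab(v) = 1`. -/
theorem exists_F2xF2_in_GL4_trivial_stab :
    ∃ B : Subgroup (GL (Fin 4) ℤ),
      Nonempty (B ≃* (FreeGroup (Fin 2) × FreeGroup (Fin 2))) ∧
        ∀ M ∈ B, Matrix.vecMul ![1, 0, 1, 0] (M : Matrix (Fin 4) (Fin 4) ℤ) = ![1, 0, 1, 0] →
          M = 1 :=
  exists_F2xF2_in_GL4_trivial_stab_general ℤ
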